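/- Let X and Y be finite nonempty types, let D be a probability mass function on X × Y with everywhere positive marginals D_X and D_Y, and suppose D is δ-hypercontractive for some 0 ≤ δ < 1. Let A ⊆ X and B ⊆ Y, and set μ = Σ_{x ∈ A} D_X(x) and ν = Σ_{y ∈ B} D_Y(y). Then Σ_{(x,y) ∈ A × B} D(x,y) ≤ μν + (4μν)^(1/(2−δ)). -/

import Mathlib

open Finset

/-- Marginal distribution on `X` of a distribution on `X × Y`. -/
noncomputable def margX {X Y : Type*} [Fintype Y] (D : X × Y → ℝ) (x : X) : ℝ :=
  ∑ y, D (x, y)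

/-- Marginal distribution on `Y` of a distribution on `X × Y`. -/
noncomputable def margY {X Y : Type*} [Fintype X] (D : X × Y → ℝ) (y : Y) : ℝ :=
  ∑ x, D (x, y)

/-- The conditional-expectation operator `T_D`: `(T_D f)(x) = E[f(y) | x]`. -/
noncomputable def condOp {X Y : Type*} [Fintype Y] (D : X × Y → ℝ) (f : Y → ℝ) (x : X) : ℝ :=
  (∑ y, D (x, y) * f y) / margX D x

/-- The `L_p` norm of `f` with respect to the weight (probability mass) `w`. -/
noncomputable def wnorm {α : Type*} [Fintype α] (w : α → ℝ) (p : ℝ) (f : α → ℝ) : ℝ :=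
  (∑ a, w a * |f a| ^ p) ^ (1 / p)

/-- `D` is `δ`-hypercontractive: `‖T_D f‖_{2 + δ/(1-δ)} ≤ ‖f‖_{2-δ}` for all `f`. -/
def Hypercontractive {X Y : Type*} [Fintype X] [Fintype Y] (D : X × Y → ℝ) (δ : ℝ) : Prop :=
  ∀ f : Y → ℝ,
    wnorm (margX D) (2 + δ / (1 - δ)) (condOp D f) ≤ wnorm (margY D) (2 - δ) f

/-!
The mass of `A × B` is the pairing `⟨1_A, T_D 1_B⟩` in `L²(D_X)`. The exponents `2 - δ` and
`2 + δ / (1 - δ)` are Hölder conjugate, so Hölder's inequality followed by hypercontractivity bounds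
it by `‖1_A‖_{2-δ} ‖1_B‖_{2-δ} = (μν)^{1/(2-δ)}`, which is already stronger than the claimed
`μν + (4μν)^{1/(2-δ)}`.
-/

theorem rpow_le_add_mul_rpow {c t r : ℝ} (hc : 1 ≤ c) (ht : 0 ≤ t) (hr : 0 ≤ r) :
    t ^ r ≤ t + (c * t) ^ r :=
  calc t ^ r ≤ (c * t) ^ r := Real.rpow_le_rpow ht (le_mul_of_one_le_left ht hc) hr
    _ ≤ t + (c * t) ^ r := le_add_of_nonneg_left ht

theorem holderConjugate_two_sub_two_add_div {δ : ℝ} (hδ : δ < 1) :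
    (2 - δ).HolderConjugate (2 + δ / (1 - δ)) := by
  have h1δ : 0 < 1 - δ := sub_pos.mpr hδ
  have hq : 2 + δ / (1 - δ) = (2 - δ) / (1 - δ) := by field_simp; ring
  have hp0 : 2 - δ ≠ 0 := by linarith
  rw [Real.holderConjugate_iff, hq]
  exact ⟨by linarith, by field_simp; ring⟩

section WeightedNorm

variable {α : Type*} [Fintype α] {w : α → ℝ} {p q : ℝ}

theorem abs_rpow_one_div_mul_rpow {a : ℝ} (ha : 0 ≤ a) (hp : p ≠ 0) (b : ℝ) :
    |a ^ (1 / p) * b| ^ p = a * |b| ^ p := by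
  rw [abs_mul, abs_of_nonneg (Real.rpow_nonneg ha _),
    Real.mul_rpow (Real.rpow_nonneg ha _) (abs_nonneg b), ← Real.rpow_mul ha,
    one_div_mul_cancel hp, Real.rpow_one]

theorem sum_weight_mul_mul_le_wnorm_mul_wnorm (hw : ∀ a, 0 ≤ w a) (hpq : p.HolderConjugate q)
    (f g : α → ℝ) : ∑ a, w a * (f a * g a) ≤ wnorm w p f * wnorm w q g := by
  have split_weight (a : α) :
      w a * (f a * g a) = w a ^ (1 / p) * f a * (w a ^ (1 / q) * g a) := by
    have hexp : 1 / p + 1 / q = 1 := by simpa only [one_div] using hpq.inv_add_inv_eq_one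
    have hweight : w a ^ (1 / p) * w a ^ (1 / q) = w a := by
      rw [← Real.rpow_add' (hw a) (hexp.symm ▸ one_ne_zero), hexp, Real.rpow_one]
    rw [mul_mul_mul_comm, hweight]
  calc ∑ a, w a * (f a * g a)
      = ∑ a, w a ^ (1 / p) * f a * (w a ^ (1 / q) * g a) :=
        sum_congr rfl fun a _ => split_weight a
    _ ≤ (∑ a, |w a ^ (1 / p) * f a| ^ p) ^ (1 / p) *
          (∑ a, |w a ^ (1 / q) * g a| ^ q) ^ (1 / q) :=
        Real.inner_le_Lp_mul_Lq univ _ _ hpq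
    _ = wnorm w p f * wnorm w q g := by
        simp only [wnorm, abs_rpow_one_div_mul_rpow (hw _) hpq.ne_zero,
          abs_rpow_one_div_mul_rpow (hw _) hpq.symm.ne_zero]

theorem wnorm_nonneg (hw : ∀ a, 0 ≤ w a) (p : ℝ) (f : α → ℝ) : 0 ≤ wnorm w p f :=
  Real.rpow_nonneg
    (sum_nonneg fun a _ => mul_nonneg (hw a) (Real.rpow_nonneg (abs_nonneg _) _)) _

theorem wnorm_indicator_one (w : α → ℝ) (hp : p ≠ 0) (s : Finset α) :
    wnorm w p (Set.indicator s 1) = (∑ a ∈ s, w a) ^ (1 / p) := by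
  classical
  simp [wnorm, Set.indicator_apply, apply_ite abs, ite_pow, Real.zero_rpow hp]

end WeightedNorm

section Hypercontractivity

variable {X Y : Type*} [Fintype Y] {D : X × Y → ℝ} {δ : ℝ}

theorem margX_mul_condOp {x : X} (hx : margX D x ≠ 0) (f : Y → ℝ) :
    margX D x * condOp D f x = ∑ y, D (x, y) * f y :=
  mul_div_cancel₀ _ hx

theorem Hypercontractive.sum_sum_mul_le_wnorm_mul_wnorm [Fintype X] (hD : Hypercontractive D δ)
    (hX : ∀ x, 0 < margX D x) (hδ : δ < 1) (g : X → ℝ) (f : Y → ℝ) :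
    ∑ x, ∑ y, g x * (D (x, y) * f y) ≤ wnorm (margX D) (2 - δ) g * wnorm (margY D) (2 - δ) f := by
  have hX0 (x : X) : 0 ≤ margX D x := (hX x).le
  calc ∑ x, ∑ y, g x * (D (x, y) * f y)
      = ∑ x, margX D x * (g x * condOp D f x) := by
        simp only [← mul_sum, ← margX_mul_condOp (hX _).ne', mul_left_comm]
    _ ≤ wnorm (margX D) (2 - δ) g * wnorm (margX D) (2 + δ / (1 - δ)) (condOp D f) :=
        sum_weight_mul_mul_le_wnorm_mul_wnorm hX0 (holderConjugate_two_sub_two_add_div hδ) g _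
    _ ≤ wnorm (margX D) (2 - δ) g * wnorm (margY D) (2 - δ) f :=
        mul_le_mul_of_nonneg_left (hD f) (wnorm_nonneg hX0 _ g)

theorem stmt9_general [Fintype X] (hX : ∀ x, 0 < margX D x) (hY : ∀ y, 0 ≤ margY D y)
    (hδ : δ < 1) (hD : Hypercontractive D δ) (A : Finset X) (B : Finset Y) :
    ∑ x ∈ A, ∑ y ∈ B, D (x, y) ≤
      ((∑ x ∈ A, margX D x) * ∑ y ∈ B, margY D y) ^ (1 / (2 - δ)) := by
  classical
  have hp : 2 - δ ≠ 0 := by linarith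
  calc ∑ x ∈ A, ∑ y ∈ B, D (x, y)
      = ∑ x, ∑ y, Set.indicator A 1 x * (D (x, y) * Set.indicator B 1 y) := by
        simp [Set.indicator_apply]
    _ ≤ wnorm (margX D) (2 - δ) (Set.indicator A 1) *
          wnorm (margY D) (2 - δ) (Set.indicator B 1) :=
        hD.sum_sum_mul_le_wnorm_mul_wnorm hX hδ _ _
    _ = ((∑ x ∈ A, margX D x) * ∑ y ∈ B, margY D y) ^ (1 / (2 - δ)) := by
        rw [wnorm_indicator_one _ hp, wnorm_indicator_one _ hp,
          Real.mul_rpow (sum_nonneg fun x _ => (hX x).le) (sum_nonneg fun y _ => hY y)]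

end Hypercontractivity

theorem stmt9 {X Y : Type*} [Fintype X] [Fintype Y] [Nonempty X] [Nonempty Y]
    (D : X × Y → ℝ) (hD0 : ∀ p, 0 ≤ D p) (hD1 : ∑ p, D p = 1)
    (hDX : ∀ x, 0 < margX D x) (hDY : ∀ y, 0 < margY D y)
    (δ : ℝ) (hδ0 : 0 ≤ δ) (hδ1 : δ < 1) (hhc : Hypercontractive D δ)
    (A : Finset X) (B : Finset Y) (μ ν : ℝ)
    (hμ : μ = ∑ x ∈ A, margX D x) (hν : ν = ∑ y ∈ B, margY D y) :
    ∑ x ∈ A, ∑ y ∈ B, D (x, y) ≤ μ * ν + (4 * μ * ν) ^ (1 / (2 - δ)) := by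
  subst hμ hν
  have hμν : 0 ≤ (∑ x ∈ A, margX D x) * ∑ y ∈ B, margY D y :=
    mul_nonneg (sum_nonneg fun x _ => (hDX x).le) (sum_nonneg fun y _ => (hDY y).le)
  rw [mul_assoc]
  exact (stmt9_general hDX (fun y => (hDY y).le) hδ1 hhc A B).trans
    (rpow_le_add_mul_rpow (by norm_num) hμν (one_div_nonneg.mpr (by linarith)))
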